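/- arXiv:1803.04276 — 2 statements merged into one kernel-verified Lean document; each statement's English description precedes it below -/
import Mathlib

section
/- Let p ∈ ℝ^{2n} be a degenerate configuration (all points p_1,…,p_n lie on a common line) with p_i ≠ p_j whenever (i,j) ∈ E. Then the gradient of the formation cost function vanishes at p: ∇V_F(p) = 0. Consequently, if the initial condition of the gradient flow ṗ = −∇V_F(p) is degenerate, the solution is stationary: p(t) = p(0) for all t ≥ 0. -/
/-!
Every summand of `V_F` is a function of the cosine of an angle `∠ p_j p_i p_k`. If the three points
are collinear this cosine is `±1`, an extreme value of the cosine, so as a function of the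
configuration it is at a local extremum and its derivative vanishes; by the chain rule so does the
gradient of `V_F`.

Away from coincident neighbours `V_F` is `C²`, so near such a critical point `P` its gradient at `Q`
is `O(‖Q - P‖)`. Grönwall's inequality then keeps a solution that starts at `P` from ever leaving.
-/

open Matrix Real

noncomputable section

/-- Points in the plane. -/
abbrev Vec2 := Fin 2 → ℝ

/-- The configuration space `ℝ^{2n}` of `n` agents in the plane. -/
abbrev Conf (n : ℕ) := EuclideanSpace ℝ (Fin n × Fin 2)

/-- The position of agent `i` in a configuration (junk value `0` for `i ≥ n`). -/
noncomputable def pt {n : ℕ} (P : Conf n) (i : ℕ) : Vec2 :=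
  fun d => if h : i < n then P (⟨i, h⟩, d) else 0

/-- Euclidean norm of a planar vector. -/
noncomputable def nrm (x : Vec2) : ℝ := Real.sqrt (x ⬝ᵥ x)

/-- The bearing `g(x,y) = (x - y)/‖x - y‖`. -/
noncomputable def brg (x y : Vec2) : Vec2 := (nrm (x - y))⁻¹ • (x - y)

/-- Cosine of the angle at vertex `t.1` between the edges towards `t.2.1` and `t.2.2`. -/
noncomputable def angCosP {n : ℕ} (P : Conf n) (t : ℕ × ℕ × ℕ) : ℝ :=
  brg (pt P t.1) (pt P t.2.1) ⬝ᵥ brg (pt P t.1) (pt P t.2.2)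

/-- The formation cost function
`V_F(p) = (1/2) Σ_{(i,j,k) ∈ T_G^F} (g_ijᵀg_ik(p) − g_ijᵀg_ik(p*))²`. -/
noncomputable def VF {n : ℕ} (TF : Finset (ℕ × ℕ × ℕ)) (Pstar P : Conf n) : ℝ :=
  (1 / 2) * ∑ t ∈ TF, (angCosP P t - angCosP Pstar t) ^ 2

section GradientFlow

open Set Filter Topology Asymptotics

variable {E : Type*} [NormedAddCommGroup E] [NormedSpace ℝ E]

lemma eventually_nhdsGT_eq_of_isIntegralCurveOn_of_isBigO_sub {v : E → E} {x : E} {γ : ℝ → E}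
    {t : ℝ} (hv : v =O[𝓝 x] fun y => y - x) (hγ : IsIntegralCurveOn γ (fun _ => v) (Ici t))
    (hx : γ t = x) : ∀ᶠ u in 𝓝[>] t, γ u = x := by
  obtain ⟨C, hC⟩ := hv.bound
  have hcont : Tendsto γ (𝓝[≥] t) (𝓝 x) := hx ▸ hγ.continuousOn t self_mem_Ici
  obtain ⟨b, htb, hb⟩ := mem_nhdsGE_iff_exists_Icc_subset.1 (hcont.eventually hC)
  have hzero : ∀ u ∈ Icc t b, γ u - x = 0 :=
    eq_zero_of_abs_deriv_le_mul_abs_self_of_eq_zero_right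
      ((hγ.continuousOn.mono Icc_subset_Ici_self).sub continuousOn_const)
      (fun u hu => ((hγ u hu.1).mono (Ici_subset_Ici.2 hu.1)).sub_const x)
      (sub_eq_zero.2 hx) (fun u hu => hb (Ico_subset_Icc_self hu))
  filter_upwards [Ioc_mem_nhdsGT htb] with u hu
  exact sub_eq_zero.1 (hzero u (Ioc_subset_Icc_self hu))

theorem eqOn_const_of_isIntegralCurveOn_of_isBigO_sub {v : E → E} {x : E} {γ : ℝ → E} {t₀ : ℝ}
    (hv : v =O[𝓝 x] fun y => y - x) (hγ : IsIntegralCurveOn γ (fun _ => v) (Ici t₀))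
    (hx : γ t₀ = x) : EqOn γ (fun _ => x) (Ici t₀) := by
  intro T hT
  have hclosed : IsClosed (γ ⁻¹' {x} ∩ Icc t₀ T) := by
    rw [inter_comm]
    exact (hγ.continuousOn.mono Icc_subset_Ici_self).preimage_isClosed_of_isClosed
      isClosed_Icc isClosed_singleton
  have hsubset : Icc t₀ T ⊆ γ ⁻¹' {x} :=
    hclosed.Icc_subset_of_forall_mem_nhdsWithin hx fun t ht =>
      eventually_nhdsGT_eq_of_isIntegralCurveOn_of_isBigO_sub hv
        (hγ.mono (Ici_subset_Ici.2 ht.2.1)) ht.1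
  exact hsubset ⟨hT, le_rfl⟩

variable {H : Type*} [NormedAddCommGroup H] [InnerProductSpace ℝ H] [CompleteSpace H]

lemma differentiableAt_gradient {f : H → ℝ} {x : H} (hf : ContDiffAt ℝ 2 f x) :
    DifferentiableAt ℝ (gradient f) x :=
  (InnerProductSpace.toDual ℝ H).symm.toContinuousLinearEquiv.differentiableAt.comp x
    ((hf.fderiv_right (m := 1) (by norm_num)).differentiableAt one_ne_zero)

theorem eqOn_const_of_isIntegralCurveOn_neg_gradient {f : H → ℝ} {x : H} {γ : ℝ → H} {t₀ : ℝ}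
    (hf : ContDiffAt ℝ 2 f x) (hcrit : gradient f x = 0)
    (hγ : IsIntegralCurveOn γ (fun _ => -gradient f) (Ici t₀)) (hx : γ t₀ = x) :
    EqOn γ (fun _ => x) (Ici t₀) := by
  have hbigO : gradient f =O[𝓝 x] fun y => y - x := by
    simpa only [hcrit, sub_zero] using (differentiableAt_gradient hf).isBigO_sub
  exact eqOn_const_of_isIntegralCurveOn_of_isBigO_sub hbigO.neg_left hγ hx

end GradientFlow

section CosAngle

open EuclideanGeometry

variable {V P : Type*} [NormedAddCommGroup V] [InnerProductSpace ℝ V] [MetricSpace P]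
  [NormedAddTorsor V P]

lemma cos_angle_eq_one_or_neg_one_of_collinear {p₁ p₂ p₃ : P} (h₁ : p₁ ≠ p₂) (h₃ : p₃ ≠ p₂)
    (h : Collinear ℝ {p₁, p₂, p₃}) : cos (∠ p₁ p₂ p₃) = 1 ∨ cos (∠ p₁ p₂ p₃) = -1 := by
  have hsin : sin (∠ p₁ p₂ p₃) = 0 :=
    ((collinear_iff_eq_or_eq_or_sin_eq_zero.1 h).resolve_left h₁).resolve_left h₃
  exact sin_eq_zero_iff_cos_eq.1 hsin

lemma isLocalExtr_cos_angle_of_collinear {X : Type*} [TopologicalSpace X] {a b c : X → P} {x : X}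
    (hab : a x ≠ b x) (hcb : c x ≠ b x) (h : Collinear ℝ {a x, b x, c x}) :
    IsLocalExtr (fun y => cos (∠ (a y) (b y) (c y))) x := by
  rcases cos_angle_eq_one_or_neg_one_of_collinear hab hcb h with hmax | hmin
  · exact Or.inr (.of_forall fun y => (cos_le_one _).trans_eq hmax.symm)
  · exact Or.inl (.of_forall fun y => hmin.trans_le (neg_one_le_cos _))

lemma contDiffAt_cos_angle {E : Type*} [NormedAddCommGroup E] [NormedSpace ℝ E] {m : WithTop ℕ∞}
    {a b c : E → V} {x : E} (ha : ContDiffAt ℝ m a x) (hb : ContDiffAt ℝ m b x)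
    (hc : ContDiffAt ℝ m c x) (hab : a x ≠ b x) (hcb : c x ≠ b x) :
    ContDiffAt ℝ m (fun y => cos (∠ (a y) (b y) (c y))) x := by
  have hab' : a x - b x ≠ 0 := sub_ne_zero.2 hab
  have hcb' : c x - b x ≠ 0 := sub_ne_zero.2 hcb
  simp only [EuclideanGeometry.angle, InnerProductGeometry.cos_angle, vsub_eq_sub]
  exact ((ha.sub hb).inner ℝ (hc.sub hb)).div
    (((ha.sub hb).norm ℝ hab').mul ((hc.sub hb).norm ℝ hcb'))
    (mul_ne_zero (norm_ne_zero_iff.2 hab') (norm_ne_zero_iff.2 hcb'))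

end CosAngle

lemma collinear_image {k V₁ V₂ P₁ P₂ : Type*} [DivisionRing k] [AddCommGroup V₁] [Module k V₁]
    [AddTorsor V₁ P₁] [AddCommGroup V₂] [Module k V₂] [AddTorsor V₂ P₂] (f : P₁ →ᵃ[k] P₂)
    {s : Set P₁} (hs : Collinear k s) : Collinear k (f '' s) := by
  obtain ⟨p₀, v, hv⟩ := (collinear_iff_exists_forall_eq_smul_vadd _).1 hs
  refine (collinear_iff_exists_forall_eq_smul_vadd _).2 ⟨f p₀, f.linear v, ?_⟩
  rintro _ ⟨p, hp, rfl⟩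
  obtain ⟨r, rfl⟩ := hv p hp
  exact ⟨r, by rw [f.map_vadd, map_smul]⟩

lemma hasFDerivAt_half_sum_sq_sub_const {ι E : Type*} [NormedAddCommGroup E] [NormedSpace ℝ E]
    {s : Finset ι} {f : ι → E → ℝ} {c : ι → ℝ} {f' : ι → E →L[ℝ] ℝ} {x : E}
    (hf : ∀ i ∈ s, HasFDerivAt (f i) (f' i) x) :
    HasFDerivAt (fun y => (1 / 2) * ∑ i ∈ s, (f i y - c i) ^ 2)
      (∑ i ∈ s, (f i x - c i) • f' i) x := by
  refine ((HasFDerivAt.fun_sum fun i hi =>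
    ((hf i hi).sub_const (c i)).pow 2).const_mul (1 / 2 : ℝ)).congr_fderiv ?_
  rw [Finset.smul_sum]
  refine Finset.sum_congr rfl fun i _ => ?_
  module

section Formation

open EuclideanGeometry

lemma inner_toLp_eq_dotProduct (x y : Vec2) :
    inner ℝ (WithLp.toLp 2 x) (WithLp.toLp 2 y) = x ⬝ᵥ y := by
  rw [EuclideanSpace.inner_toLp_toLp, star_trivial, dotProduct_comm]

lemma nrm_eq_norm_toLp (x : Vec2) : nrm x = ‖WithLp.toLp 2 x‖ := by
  rw [nrm, norm_eq_sqrt_real_inner, inner_toLp_eq_dotProduct]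

lemma brg_dotProduct_brg (x y z : Vec2) :
    brg x y ⬝ᵥ brg x z = cos (∠ (WithLp.toLp 2 y) (WithLp.toLp 2 x) (WithLp.toLp 2 z)) := by
  rw [EuclideanGeometry.angle, ← InnerProductGeometry.angle_neg_neg, neg_vsub_eq_vsub_rev,
    neg_vsub_eq_vsub_rev, InnerProductGeometry.cos_angle, vsub_eq_sub, vsub_eq_sub,
    ← WithLp.toLp_sub, ← WithLp.toLp_sub, inner_toLp_eq_dotProduct, ← nrm_eq_norm_toLp,
    ← nrm_eq_norm_toLp]
  simp only [brg, smul_dotProduct, dotProduct_smul, smul_eq_mul]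
  ring

variable {n : ℕ}

/-- The position of agent `i` as a point of the Euclidean plane. The type `Vec2` of `pt P i` carries
the sup norm, so angles have to be measured after this change of type. -/
def planePt (P : Conf n) (i : ℕ) : EuclideanSpace ℝ (Fin 2) := WithLp.toLp 2 (pt P i)

lemma planePt_ne_planePt_iff {P : Conf n} {i j : ℕ} : planePt P i ≠ planePt P j ↔ pt P i ≠ pt P j :=
  (WithLp.toLp_injective 2).ne_iff

lemma contDiff_planePt {m : WithTop ℕ∞} (i : ℕ) : ContDiff ℝ m fun P : Conf n => planePt P i := by
  refine contDiff_euclidean.2 fun d => ?_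
  by_cases hi : i < n
  · simp only [planePt, pt, hi, dite_true]
    fun_prop
  · simp only [planePt, pt, hi, dite_false]
    exact contDiff_const

lemma angCosP_eq_cos_angle (P : Conf n) (t : ℕ × ℕ × ℕ) :
    angCosP P t = cos (∠ (planePt P t.2.1) (planePt P t.1) (planePt P t.2.2)) :=
  brg_dotProduct_brg _ _ _

lemma contDiffAt_angCosP {m : WithTop ℕ∞} {P : Conf n} {t : ℕ × ℕ × ℕ}
    (hij : pt P t.1 ≠ pt P t.2.1) (hik : pt P t.1 ≠ pt P t.2.2) :
    ContDiffAt ℝ m (fun Q => angCosP Q t) P := by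
  simp only [angCosP_eq_cos_angle]
  exact contDiffAt_cos_angle (contDiff_planePt _).contDiffAt (contDiff_planePt _).contDiffAt
    (contDiff_planePt _).contDiffAt (planePt_ne_planePt_iff.2 hij.symm)
    (planePt_ne_planePt_iff.2 hik.symm)

lemma collinear_planePt {P : Conf n} {i j k : ℕ} (h : Collinear ℝ {pt P i, pt P j, pt P k}) :
    Collinear ℝ {planePt P i, planePt P j, planePt P k} := by
  have himage := collinear_image (WithLp.linearEquiv 2 ℝ Vec2).symm.toLinearMap.toAffineMap h
  rw [Set.image_insert_eq, Set.image_insert_eq, Set.image_singleton] at himage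
  exact himage

lemma hasFDerivAt_angCosP_of_collinear {P : Conf n} {t : ℕ × ℕ × ℕ}
    (hij : pt P t.1 ≠ pt P t.2.1) (hik : pt P t.1 ≠ pt P t.2.2)
    (h : Collinear ℝ {pt P t.2.1, pt P t.1, pt P t.2.2}) :
    HasFDerivAt (fun Q => angCosP Q t) (0 : Conf n →L[ℝ] ℝ) P := by
  have hextr : IsLocalExtr (fun Q => angCosP Q t) P := by
    simp only [angCosP_eq_cos_angle]
    exact isLocalExtr_cos_angle_of_collinear (planePt_ne_planePt_iff.2 hij.symm)
      (planePt_ne_planePt_iff.2 hik.symm) (collinear_planePt h)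
  rw [← hextr.fderiv_eq_zero]
  exact ((contDiffAt_angCosP hij hik).differentiableAt one_ne_zero).hasFDerivAt

variable {TF : Finset (ℕ × ℕ × ℕ)} {Pstar P : Conf n}

lemma contDiffAt_VF {m : WithTop ℕ∞}
    (hne : ∀ t ∈ TF, pt P t.1 ≠ pt P t.2.1 ∧ pt P t.1 ≠ pt P t.2.2) :
    ContDiffAt ℝ m (VF TF Pstar) P :=
  contDiffAt_const.mul <| ContDiffAt.sum fun t ht =>
    ((contDiffAt_angCosP (hne t ht).1 (hne t ht).2).sub contDiffAt_const).pow 2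

lemma gradient_VF_eq_zero_of_collinear
    (hne : ∀ t ∈ TF, pt P t.1 ≠ pt P t.2.1 ∧ pt P t.1 ≠ pt P t.2.2)
    (hcol : ∀ t ∈ TF, Collinear ℝ {pt P t.2.1, pt P t.1, pt P t.2.2}) :
    gradient (VF TF Pstar) P = 0 := by
  have hfderiv : HasFDerivAt (VF TF Pstar) (0 : Conf n →L[ℝ] ℝ) P :=
    (hasFDerivAt_half_sum_sq_sub_const fun t ht =>
      hasFDerivAt_angCosP_of_collinear (hne t ht).1 (hne t ht).2 (hcol t ht)).congr_fderiv
      (by simp only [smul_zero, Finset.sum_const_zero])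
  rw [gradient, hfderiv.fderiv, map_zero]

theorem degenerate_configuration_is_equilibrium_general
    (hne : ∀ t ∈ TF, pt P t.1 ≠ pt P t.2.1 ∧ pt P t.1 ≠ pt P t.2.2)
    (hcol : ∀ t ∈ TF, Collinear ℝ {pt P t.2.1, pt P t.1, pt P t.2.2}) :
    gradient (VF TF Pstar) P = 0 ∧
    ∀ sol : ℝ → Conf n, sol 0 = P →
      IsIntegralCurveOn sol (fun _ => -gradient (VF TF Pstar)) (Set.Ici 0) →
      ∀ t : ℝ, 0 ≤ t → sol t = P :=
  have hcrit := gradient_VF_eq_zero_of_collinear hne hcol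
  ⟨hcrit, fun _ h0 hsol _ ht =>
    eqOn_const_of_isIntegralCurveOn_neg_gradient (contDiffAt_VF hne) hcrit hsol h0 ht⟩

lemma collinear_pt_of_collinear_range {i j k : ℕ}
    (h : Collinear ℝ (Set.range fun i : Fin n => pt P i)) (hi : i < n) (hj : j < n) (hk : k < n) :
    Collinear ℝ {pt P i, pt P j, pt P k} := by
  refine h.subset ?_
  rintro _ (rfl | rfl | rfl)
  exacts [⟨⟨i, hi⟩, rfl⟩, ⟨⟨j, hj⟩, rfl⟩, ⟨⟨k, hk⟩, rfl⟩]

end Formation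

/-- at a degenerate configuration (all points collinear) the gradient of
the formation cost vanishes; consequently any solution of the gradient flow starting at
a degenerate configuration is stationary. -/
theorem degenerate_configuration_is_equilibrium
    {n : ℕ} (E : Finset (ℕ × ℕ))
    (hV : ∀ e ∈ E, e.1 < n ∧ e.2 < n)
    (hsym : ∀ e ∈ E, (e.2, e.1) ∈ E)
    (hirr : ∀ e ∈ E, e.1 ≠ e.2)
    (TF : Finset (ℕ × ℕ × ℕ))
    (hTF : ∀ t : ℕ × ℕ × ℕ, t ∈ TF ↔
      ((t.1, t.2.1) ∈ E ∧ (t.2.1, t.2.2) ∈ E ∧ (t.1, t.2.2) ∈ E ∧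
        t.1 < t.2.2 ∧ t.2.1 < t.2.2))
    (Pstar : Conf n)
    (hPs : ∀ e ∈ E, pt Pstar e.1 ≠ pt Pstar e.2)
    (P : Conf n)
    (hP : ∀ e ∈ E, pt P e.1 ≠ pt P e.2)
    (hdeg : Collinear ℝ (Set.range fun i : Fin n => pt P i)) :
    gradient (VF TF Pstar) P = 0 ∧
    ∀ sol : ℝ → Conf n, sol 0 = P →
      (∀ t : ℝ, 0 ≤ t → HasDerivAt sol (-(gradient (VF TF Pstar) (sol t))) t) →
      ∀ t : ℝ, 0 ≤ t → sol t = P := by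
  obtain ⟨hgrad, hflow⟩ := degenerate_configuration_is_equilibrium_general (Pstar := Pstar)
    (fun t ht => ⟨hP _ ((hTF t).1 ht).1, hP _ ((hTF t).1 ht).2.2.1⟩)
    (fun t ht => collinear_pt_of_collinear_range hdeg (hV _ ((hTF t).1 ht).1).2
      (hV _ ((hTF t).1 ht).1).1 (hV _ ((hTF t).1 ht).2.2.1).2)
  exact ⟨hgrad, fun sol h0 hsol => hflow sol h0 fun t ht => (hsol t ht).hasDerivWithinAt⟩
end
end

section
/- Consider n ≥ 3 agents with single-integrator dynamics ṗ_i = u_i in the plane under the gradient control u = −∇V_F(p), and suppose Assumption 1 holds: G contains a spanning triangulated Laman subgraph L_n such that (L_n,p*) is strongly nondegenerate. Let 𝓔 = 𝒮_{p*} = {q ∈ ℝ^{2n} : q_i = c·R·p*_i + ξ for all i, for some R ∈ O(2), c ∈ ℝ∖{0}, ξ ∈ ℝ²}. Then for every q ∈ 𝓔 there is a neighborhood U_q of q in ℝ^{2n} such that every solution of ṗ = −∇V_F(p) with p(0) ∈ U_q exists for all t ≥ 0 and converges as t → ∞ to some point p† ∈ 𝓔. -/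
open Matrix Real

noncomputable section

/-- Triangulated Laman graphs on vertex set `{0, …, n-1}` (edges stored as symmetric
pairs). -/
inductive IsTLGraph : ℕ → Finset (ℕ × ℕ) → Prop
  | base : IsTLGraph 2 {(0, 1), (1, 0)}
  | step {n : ℕ} {E : Finset (ℕ × ℕ)} {i j : ℕ} :
      IsTLGraph n E → (i, j) ∈ E →
      IsTLGraph (n + 1) (E ∪ {(n, i), (i, n), (n, j), (j, n)})

/-- A target framework is strongly nondegenerate if the points of every triangle of the
graph are not collinear. -/
def StronglyNondegP {n : ℕ} (E : Finset (ℕ × ℕ)) (P : Conf n) : Prop :=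
  ∀ i j k : ℕ, (i, j) ∈ E → (j, k) ∈ E → (i, k) ∈ E →
    ¬ Collinear ℝ ({pt P i, pt P j, pt P k} : Set Vec2)

/-- The target shape set `𝓔 = 𝒮_{p*}`: all images of `p*` under translations, rotations,
reflections and nonzero scalings. -/
def targetSet {n : ℕ} (Pstar : Conf n) : Set (Conf n) :=
  {Q | ∃ c : ℝ, c ≠ 0 ∧ ∃ R ∈ Matrix.orthogonalGroup (Fin 2) ℝ, ∃ ξ : Vec2,
    ∀ i : Fin n, pt Q i = c • R.mulVec (pt Pstar i) + ξ}

/-!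
The cost is `V = 1 / 2 * ‖r‖ ^ 2`, where `r` lists the errors of the angle cosines. Let `q` be a
target configuration. For `p` near `q`, the distance from `p` to the target set is `O(‖r p‖)`: to
first order two angles determine the shape of a nondegenerate triangle, so the triangle shapes of
`p` are those of `q` up to `O(‖r p‖)`, and adding the vertices one at a time along the Laman
construction shows that `p` is this close to the similar copy of `q` with the same first edge.

Such an error bound for a `C¹` residual `r` implies the Polyak–Łojasiewicz inequality
`μ * V ≤ ‖∇V‖ ^ 2` near `q`. Along a gradient curve it makes `√V` decrease at a rate proportional
to the speed, so the curve has length `O(√(V (γ 0)))`: it stays near `q` and converges to a zero of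
`V`, which by the error bound is a target configuration.
-/

section VectorFields

open Set Metric
open scoped Manifold Topology

variable {E : Type*} [NormedAddCommGroup E] [NormedSpace ℝ E]

theorem exists_forall_hasDerivAt_of_hasCompactSupport [CompleteSpace E] {v : E → E}
    (hv : ContDiff ℝ 1 v) (hc : HasCompactSupport v) (x : E) :
    ∃ γ : ℝ → E, γ 0 = x ∧ ∀ t, HasDerivAt γ (v (γ t)) t := by
  obtain ⟨K, hK⟩ := hv.lipschitzWith_of_hasCompactSupport hc one_ne_zero
  obtain ⟨M, hM⟩ := hc.exists_bound_of_continuous hv.continuous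
  have hpicard (a : ℝ) : IsPicardLindelof (fun _ ↦ v) (tmin := -|a|) (tmax := |a|)
      ⟨0, by simp⟩ x (M.toNNReal * |a|.toNNReal) 0 M.toNNReal K :=
    .of_time_independent (fun y _ ↦ (hM y).trans (le_coe_toNNReal M)) hK.lipschitzOnWith (by simp)
  have hglue := exists_isMIntegralCurve_iff_exists_isMIntegralCurveOn_Ioo (I := 𝓘(ℝ, E)) (v := v)
    (contMDiff_vectorSpace_iff_contDiff.2 hv) x
  obtain ⟨γ, hγ₀, hγ⟩ := hglue.2 fun a ↦ by
    obtain ⟨γ, hγ₀, hγ⟩ := (hpicard a).exists_eq_forall_mem_Icc_hasDerivWithinAt₀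
    have hsub : Ioo (-a) a ⊆ Icc (-|a|) |a| :=
      Ioo_subset_Icc_self.trans (Icc_subset_Icc (neg_le_neg (le_abs_self a)) (le_abs_self a))
    exact ⟨γ, hγ₀, fun t ht ↦ hasMFDerivWithinAt_iff_hasFDerivWithinAt.2
      ((hγ t (hsub ht)).mono hsub).hasFDerivWithinAt⟩
  exact ⟨γ, hγ₀, fun t ↦ hasDerivAt_iff_hasFDerivAt.2 (hasMFDerivAt_iff_hasFDerivAt.1 (hγ t))⟩

theorem exists_contDiff_hasCompactSupport_eventuallyEq [FiniteDimensional ℝ E]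
    {F : Type*} [NormedAddCommGroup F] [NormedSpace ℝ F] {v : E → F} {q : E} {k : ℕ}
    (hv : ContDiffAt ℝ k v q) :
    ∃ w : E → F, ContDiff ℝ k w ∧ HasCompactSupport w ∧ w =ᶠ[𝓝 q] v := by
  obtain ⟨R, hR, hball⟩ := nhds_basis_closedBall.eventually_iff.1 (hv.eventually (by simp))
  let χ : ContDiffBump q := ⟨R / 2, R, by positivity, by linarith⟩
  refine ⟨fun p ↦ χ p • v p, contDiff_iff_contDiffAt.2 fun p ↦ ?_, χ.hasCompactSupport.smul_right,
    χ.eventuallyEq_one.mono fun p hp ↦ by simp only [hp, Pi.one_apply, one_smul]⟩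
  by_cases hp : p ∈ closedBall q R
  · exact χ.contDiffAt.smul (hball hp)
  · have hχ : χ =ᶠ[𝓝 p] 0 := notMem_tsupport_iff_eventuallyEq.1 (by rwa [χ.tsupport_eq])
    exact (contDiffAt_const (c := (0 : F))).congr_of_eventuallyEq
      (hχ.mono fun x hx ↦ by simp only [hx, Pi.zero_apply, zero_smul])

end VectorFields

section GradientCurves

open Set Metric Filter
open scoped Topology

variable {X : Type*} [NormedAddCommGroup X] [InnerProductSpace ℝ X] [CompleteSpace X]
  {V : X → ℝ} {γ : ℝ → X} {s : Set X} {q : X} {a b μ R : ℝ}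

/-- `γ` solves the gradient flow equation `γ' = -∇V(γ)` at every time of `I`. -/
def IsGradientCurveOn (V : X → ℝ) (γ : ℝ → X) (I : Set ℝ) : Prop :=
  ∀ t ∈ I, HasDerivAt γ (-gradient V (γ t)) t

/-- The Polyak–Łojasiewicz inequality on `s`, for a function whose minimum value is `0`. The
constant is normalised without the usual factor `1 / 2`. -/
def PolyakLojasiewiczOn (V : X → ℝ) (μ : ℝ) (s : Set X) : Prop :=
  ∀ p ∈ s, μ * V p ≤ ‖gradient V p‖ ^ 2

/-- Local convergence of the gradient flow of `V` near `q`: from every starting point near `q` there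
is a solution for all positive times, and every such solution converges to a point of `S`. -/
def GradientFlowConvergesLocally (V : X → ℝ) (S : Set X) (q : X) : Prop :=
  ∃ U ∈ 𝓝 q, ∀ p ∈ U,
    (∃ γ : ℝ → X, γ 0 = p ∧ IsGradientCurveOn V γ (Ici 0)) ∧
    ∀ γ : ℝ → X, γ 0 = p → IsGradientCurveOn V γ (Ici 0) → ∃ x ∈ S, Tendsto γ atTop (𝓝 x)

theorem gradient_eq_zero_of_nonneg_of_eq_zero (hV : ∀ p, 0 ≤ V p) {p : X} (hp : V p = 0) :
    gradient V p = 0 := by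
  have hmin : IsLocalMin V p := .of_forall fun x ↦ hp.trans_le (hV x)
  rw [gradient, hmin.fderiv_eq_zero, map_zero]

namespace IsGradientCurveOn

theorem mono {I J : Set ℝ} (h : IsGradientCurveOn V γ J) (hIJ : I ⊆ J) :
    IsGradientCurveOn V γ I :=
  fun t ht ↦ h t (hIJ ht)

theorem continuousOn {I : Set ℝ} (h : IsGradientCurveOn V γ I) : ContinuousOn γ I :=
  fun t ht ↦ (h t ht).continuousAt.continuousWithinAt

theorem hasDerivAt_comp {I : Set ℝ} (h : IsGradientCurveOn V γ I) {t : ℝ} (ht : t ∈ I)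
    (hV : DifferentiableAt ℝ V (γ t)) :
    HasDerivAt (V ∘ γ) (-‖gradient V (γ t)‖ ^ 2) t := by
  refine (hV.hasGradientAt.hasFDerivAt.comp_hasDerivAt t (h t ht)).congr_deriv ?_
  rw [map_neg, InnerProductSpace.toDual_apply_apply, real_inner_self_eq_norm_sq]

theorem antitoneOn_comp {I : Set ℝ} (hI : Convex ℝ I) (h : IsGradientCurveOn V γ I)
    (hV : ∀ t ∈ I, DifferentiableAt ℝ V (γ t)) : AntitoneOn (V ∘ γ) I :=
  antitoneOn_of_hasDerivWithinAt_nonpos hI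
    (fun t ht ↦ (h.hasDerivAt_comp ht (hV t ht)).continuousAt.continuousWithinAt)
    (fun t ht ↦ (h.hasDerivAt_comp (interior_subset ht)
      (hV t (interior_subset ht))).hasDerivWithinAt)
    fun _ _ ↦ neg_nonpos.2 (sq_nonneg _)

theorem hasDerivWithinAt_sqrt_comp (h : IsGradientCurveOn V γ (Icc a b))
    (hdiff : ∀ t ∈ Icc a b, DifferentiableAt ℝ V (γ t)) (hV : ∀ p, 0 ≤ V p) {t : ℝ}
    (ht : t ∈ Ico a b) :
    HasDerivWithinAt (fun u ↦ √(V (γ u)))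
      (-‖gradient V (γ t)‖ ^ 2 / (2 * √(V (γ t)))) (Ici t) t := by
  have hmem := Ico_subset_Icc_self ht
  rcases eq_or_ne (V (γ t)) 0 with h0 | h0
  · have hzero : (fun u ↦ √(V (γ u))) =ᶠ[𝓝[≥] t] fun _ ↦ 0 := by
      filter_upwards [Icc_mem_nhdsGE ht.2] with u hu
      have hle : V (γ u) ≤ V (γ t) := h.antitoneOn_comp (convex_Icc a b) hdiff hmem
        ⟨ht.1.trans hu.1, hu.2⟩ hu.1
      rw [le_antisymm (hle.trans h0.le) (hV _), sqrt_zero]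
    rw [h0, sqrt_zero, mul_zero, div_zero]
    exact (hasDerivWithinAt_const t _ 0).congr_of_eventuallyEq hzero (by rw [h0, sqrt_zero])
  · exact ((h.hasDerivAt_comp hmem (hdiff t hmem)).sqrt h0).hasDerivWithinAt

/-- The length of a gradient curve is controlled by the decrease of `√V`, because `√V` decreases
along it at least at the rate `√μ / 2` per unit of length. -/
theorem norm_sub_le (h : IsGradientCurveOn V γ (Icc a b))
    (hdiff : ∀ t ∈ Icc a b, DifferentiableAt ℝ V (γ t)) (hV : ∀ p, 0 ≤ V p) (hμ : 0 < μ)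
    (hPL : PolyakLojasiewiczOn V μ (γ '' Icc a b)) (hab : a ≤ b) :
    ‖γ b - γ a‖ ≤ 2 / √μ * (√(V (γ a)) - √(V (γ b))) := by
  have hspeed : ∀ t ∈ Ico a b, ‖-gradient V (γ t)‖ ≤
      2 / √μ * (0 - -‖gradient V (γ t)‖ ^ 2 / (2 * √(V (γ t)))) := fun t ht ↦ by
    rw [norm_neg]
    rcases (hV (γ t)).eq_or_lt with h0 | h0
    · rw [gradient_eq_zero_of_nonneg_of_eq_zero hV h0.symm]; simp
    · have hPLt : √μ * √(V (γ t)) ≤ ‖gradient V (γ t)‖ := by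
        rw [← sqrt_mul hμ.le]
        exact sqrt_le_iff.2 ⟨norm_nonneg _, hPL _ (mem_image_of_mem γ (Ico_subset_Icc_self ht))⟩
      have := sqrt_pos.2 hμ
      have := sqrt_pos.2 h0
      rw [show 2 / √μ * (0 - -‖gradient V (γ t)‖ ^ 2 / (2 * √(V (γ t)))) =
        ‖gradient V (γ t)‖ ^ 2 / (√μ * √(V (γ t))) by field_simp; ring, le_div_iff₀ (by positivity),
        sq]
      gcongr
  refine image_norm_le_of_norm_deriv_right_le_deriv_boundary' (f := fun t ↦ γ t - γ a)
    (B := fun t ↦ 2 / √μ * (√(V (γ a)) - √(V (γ t))))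
    (h.continuousOn.sub continuousOn_const)
    (fun t ht ↦ ((h t (Ico_subset_Icc_self ht)).sub_const _).hasDerivWithinAt)
    (by simp)
    (continuousOn_const.mul (continuousOn_const.sub fun t ht ↦
      ((hdiff t ht).continuousAt.comp_continuousWithinAt (h.continuousOn t ht)).sqrt))
    (fun t ht ↦ ((hasDerivWithinAt_const _ _ _).sub
      (h.hasDerivWithinAt_sqrt_comp hdiff hV ht)).const_mul _) hspeed ⟨hab, le_rfl⟩

theorem comp_le_mul_exp (h : IsGradientCurveOn V γ (Icc a b))
    (hdiff : ∀ t ∈ Icc a b, DifferentiableAt ℝ V (γ t))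
    (hPL : PolyakLojasiewiczOn V μ (γ '' Icc a b)) (hab : a ≤ b) :
    V (γ b) ≤ V (γ a) * exp (-μ * (b - a)) := by
  have hgron := le_gronwallBound_of_liminf_deriv_right_le (f := fun t ↦ V (γ t))
    (f' := fun t ↦ -‖gradient V (γ t)‖ ^ 2) (δ := V (γ a)) (K := -μ) (ε := 0) (a := a) (b := b)
    (fun t ht ↦ (h.hasDerivAt_comp ht (hdiff t ht)).continuousAt.continuousWithinAt)
    (fun t ht r hr ↦ ((h.hasDerivAt_comp (Ico_subset_Icc_self ht)
      (hdiff t (Ico_subset_Icc_self ht))).hasDerivWithinAt).liminf_right_slope_le hr)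
    le_rfl (fun t ht ↦ by linarith [hPL _ (mem_image_of_mem γ (Ico_subset_Icc_self ht))])
  simpa only [gronwallBound_ε0] using hgron b ⟨hab, le_rfl⟩

end IsGradientCurveOn

theorem exists_eq_and_forall_le_of_continuousOn {f : ℝ → ℝ} {c : ℝ} (hf : ContinuousOn f (Icc a b))
    (hab : a ≤ b) (ha : f a ≤ c) (hb : c ≤ f b) :
    ∃ T ∈ Icc a b, f T = c ∧ ∀ t ∈ Icc a T, f t ≤ c := by
  have hcompact : IsCompact (Icc a b ∩ f ⁻¹' {c}) :=
    isCompact_Icc.of_isClosed_subset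
      (hf.preimage_isClosed_of_isClosed isClosed_Icc isClosed_singleton) inter_subset_left
  obtain ⟨T₀, hT₀⟩ := intermediate_value_Icc hab hf ⟨ha, hb⟩
  obtain ⟨T, ⟨hT, hfT⟩, hleast⟩ := hcompact.exists_isLeast ⟨T₀, hT₀⟩
  refine ⟨T, hT, hfT, fun t ht ↦ ?_⟩
  by_contra! hlt
  obtain ⟨u, hu, hfu⟩ := intermediate_value_Icc ht.1
    (hf.mono (Icc_subset_Icc_right (ht.2.trans hT.2))) ⟨ha, hlt.le⟩
  have hTu : T ≤ u := hleast ⟨⟨hu.1, hu.2.trans (ht.2.trans hT.2)⟩, hfu⟩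
  have htT : t = T := le_antisymm ht.2 (hTu.trans hu.2)
  exact hlt.ne' (htT ▸ hfT)

/-- A curve that follows the gradient flow while it is in the ball cannot leave the ball if it
starts close enough to the centre, since its length is at most `2 / √μ * √(V (γ 0))`. -/
theorem mem_closedBall_of_gradient_curve (hdiff : ∀ p ∈ closedBall q R, DifferentiableAt ℝ V p)
    (hV : ∀ p, 0 ≤ V p) (hμ : 0 < μ) (hPL : PolyakLojasiewiczOn V μ (closedBall q R))
    (hcont : ContinuousOn γ (Ici 0))
    (hγ : IsGradientCurveOn V γ (Ici 0 ∩ γ ⁻¹' closedBall q R))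
    (hstart : dist (γ 0) q + 2 / √μ * √(V (γ 0)) < R) {t : ℝ} (ht : 0 ≤ t) :
    γ t ∈ closedBall q R := by
  have hlength : 0 ≤ 2 / √μ * √(V (γ 0)) := by positivity
  by_contra! hout
  obtain ⟨T, hT, hexit, hinside⟩ := exists_eq_and_forall_le_of_continuousOn
    (f := fun u ↦ dist (γ u) q) ((continuous_id.dist continuous_const).comp_continuousOn
    (hcont.mono Icc_subset_Ici_self)) ht
    (by linarith) (not_le.1 hout).le
  have hcurve : IsGradientCurveOn V γ (Icc 0 T) := hγ.mono fun u hu ↦ ⟨hu.1, hinside u hu⟩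
  have hlen := hcurve.norm_sub_le (fun u hu ↦ hdiff _ (hinside u hu)) hV hμ
    (fun p hp ↦ by obtain ⟨u, hu, rfl⟩ := hp; exact hPL _ (hinside u hu)) hT.1
  have : R ≤ dist (γ 0) q + 2 / √μ * √(V (γ 0)) := calc
    R = dist (γ T) q := hexit.symm
    _ ≤ dist (γ T) (γ 0) + dist (γ 0) q := dist_triangle _ _ _
    _ ≤ 2 / √μ * (√(V (γ 0)) - √(V (γ T))) + dist (γ 0) q := by
      rw [dist_eq_norm]; gcongr
    _ ≤ 2 / √μ * √(V (γ 0)) + dist (γ 0) q := by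
      gcongr; linarith [sqrt_nonneg (V (γ T))]
    _ = _ := add_comm _ _
  linarith

theorem IsGradientCurveOn.exists_tendsto (h : IsGradientCurveOn V γ (Ici 0)) (hs : IsClosed s)
    (hmem : ∀ t, 0 ≤ t → γ t ∈ s) (hdiff : ∀ p ∈ s, DifferentiableAt ℝ V p) (hV : ∀ p, 0 ≤ V p)
    (hμ : 0 < μ) (hPL : PolyakLojasiewiczOn V μ s) :
    ∃ x ∈ s, V x = 0 ∧ Tendsto γ atTop (𝓝 x) := by
  have hPLimage {a b : ℝ} (ha : 0 ≤ a) : PolyakLojasiewiczOn V μ (γ '' Icc a b) := by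
    rintro _ ⟨t, ht, rfl⟩
    exact hPL _ (hmem t (ha.trans ht.1))
  have hdiff' {a b : ℝ} (ha : 0 ≤ a) : ∀ t ∈ Icc a b, DifferentiableAt ℝ V (γ t) :=
    fun t ht ↦ hdiff _ (hmem t (ha.trans ht.1))
  have hsub {a b : ℝ} (ha : 0 ≤ a) : Icc a b ⊆ Ici 0 := fun t ht ↦ ha.trans ht.1
  have hdecay : Tendsto (fun t ↦ V (γ t)) atTop (𝓝 0) := by
    have hexp : Tendsto (fun t ↦ V (γ 0) * exp (-μ * (t - 0))) atTop (𝓝 0) := by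
      simpa using (tendsto_exp_neg_atTop_nhds_zero.comp
        (tendsto_id.const_mul_atTop hμ)).const_mul (V (γ 0))
    refine squeeze_zero' (.of_forall fun t ↦ hV _) ?_ hexp
    filter_upwards [eventually_ge_atTop 0] with t ht
    exact (h.mono (hsub le_rfl)).comp_le_mul_exp (hdiff' le_rfl) (hPLimage le_rfl) ht
  have hcauchy : CauchySeq fun t : Ici (0 : ℝ) ↦ γ t := by
    refine cauchySeq_of_le_tendsto_0' (fun t ↦ 2 / √μ * √(V (γ t))) (fun t u htu ↦ ?_) ?_
    · rw [dist_comm, dist_eq_norm]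
      refine ((h.mono (hsub t.2)).norm_sub_le (hdiff' t.2) hV hμ (hPLimage t.2) htu).trans ?_
      gcongr
      linarith [sqrt_nonneg (V (γ u))]
    · simpa using ((tendsto_comp_val_Ici_atTop.2 hdecay).sqrt.const_mul (2 / √μ))
  obtain ⟨x, hx⟩ := cauchySeq_tendsto_of_complete hcauchy
  have hlim : Tendsto γ atTop (𝓝 x) := tendsto_comp_val_Ici_atTop.1 hx
  have hxs : x ∈ s := hs.mem_of_tendsto hlim ((eventually_ge_atTop 0).mono hmem)
  exact ⟨x, hxs, tendsto_nhds_unique ((hdiff x hxs).continuousAt.tendsto.comp hlim) hdecay, hlim⟩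

theorem contDiffAt_gradient {k m : WithTop ℕ∞} (hV : ContDiffAt ℝ m V q) (hkm : k + 1 ≤ m) :
    ContDiffAt ℝ k (gradient V) q :=
  (InnerProductSpace.toDual ℝ X).symm.toContinuousLinearEquiv.contDiff.contDiffAt.comp q
    (hV.fderiv_right hkm)

theorem gradientFlowConvergesLocally_of_polyakLojasiewicz [FiniteDimensional ℝ X] {S : Set X}
    (hC2 : ContDiffAt ℝ 2 V q) (hV : ∀ p, 0 ≤ V p) (hVq : V q = 0) (hμ : 0 < μ)
    (hPL : ∀ᶠ p in 𝓝 q, μ * V p ≤ ‖gradient V p‖ ^ 2) (hS : ∀ᶠ p in 𝓝 q, V p = 0 → p ∈ S) :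
    GradientFlowConvergesLocally V S q := by
  obtain ⟨v, hv, hvcompact, hveq⟩ := exists_contDiff_hasCompactSupport_eventuallyEq (k := 1)
    (contDiffAt_gradient hC2 (by norm_num)).neg
  have hdiff : ∀ᶠ p in 𝓝 q, DifferentiableAt ℝ V p :=
    (hC2.eventually (by simp)).mono fun p hp ↦ hp.differentiableAt (by simp)
  obtain ⟨R, hR, hball⟩ := nhds_basis_closedBall.eventually_iff.1
    (hdiff.and (hPL.and (hS.and hveq)))
  have hclose : ∀ᶠ p in 𝓝 q, dist p q + 2 / √μ * √(V p) < R := by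
    have hcont : ContinuousAt (fun p ↦ dist p q + 2 / √μ * √(V p)) q :=
      (continuousAt_id.dist continuousAt_const).add
        (continuousAt_const.mul hC2.continuousAt.sqrt)
    exact hcont.eventually_lt_const (by simpa [hVq] using hR)
  have hstay {γ : ℝ → X} := mem_closedBall_of_gradient_curve (γ := γ) (fun p hp ↦ (hball hp).1)
    hV hμ fun p hp ↦ (hball hp).2.1
  refine ⟨_, hclose, fun p hp ↦ ⟨?_, ?_⟩⟩
  · obtain ⟨γ, rfl, hγ⟩ := exists_forall_hasDerivAt_of_hasCompactSupport hv hvcompact p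
    have hγ' {t : ℝ} (ht : γ t ∈ closedBall q R) : HasDerivAt γ (-gradient V (γ t)) t := by
      simpa only [(hball ht).2.2.2] using hγ t
    exact ⟨γ, rfl, fun t ht ↦ hγ' (hstay (fun u _ ↦ (hγ u).continuousAt.continuousWithinAt)
      (fun _ hu ↦ hγ' hu.2) hp ht)⟩
  · rintro γ rfl hγ
    have hmem (t : ℝ) (ht : 0 ≤ t) := hstay hγ.continuousOn (hγ.mono inter_subset_left) hp ht
    obtain ⟨x, hx, hVx, hlim⟩ := hγ.exists_tendsto isClosed_closedBall hmem
      (fun p hp ↦ (hball hp).1) hV hμ fun p hp ↦ (hball hp).2.1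
    exact ⟨x, (hball hx).2.2.1 hVx, hlim⟩

end GradientCurves

section LeastSquares

open Filter Asymptotics
open scoped Topology

variable {X Y : Type*} [NormedAddCommGroup X] [NormedAddCommGroup Y] {r : X → Y} {S : Set X} {q : X}

/-- Near `q`, the distance from `p` to the solution set `S` of `r = 0` is at most a constant times
the residual `‖r p‖` (metric subregularity of `r`); `e p` is a nearby solution. -/
def HasLocalErrorBound (r : X → Y) (S : Set X) (q : X) : Prop :=
  ∃ e : X → X, (∀ᶠ p in 𝓝 q, e p ∈ S) ∧ (fun p ↦ p - e p) =O[𝓝 q] r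

theorem HasLocalErrorBound.eventually_mem (h : HasLocalErrorBound r S q) :
    ∀ᶠ p in 𝓝 q, r p = 0 → p ∈ S := by
  obtain ⟨e, heS, he⟩ := h
  filter_upwards [heS, he.eq_zero_imp] with p hpS hp hrp
  rwa [sub_eq_zero.1 (hp hrp)]

theorem isLittleO_sub_sub_fderiv {𝕜 : Type*} [RCLike 𝕜] [NormedSpace 𝕜 X] [NormedSpace 𝕜 Y]
    (hr : ContDiffAt 𝕜 1 r q) :
    (fun x : X × X ↦ r x.1 - r x.2 - fderiv 𝕜 r x.1 (x.1 - x.2))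
      =o[𝓝 (q, q)] fun x ↦ x.1 - x.2 := by
  have hstrict := (hr.hasStrictFDerivAt one_ne_zero).isLittleO
  have hfderiv : Tendsto (fun x : X × X ↦ fderiv 𝕜 r q - fderiv 𝕜 r x.1) (𝓝 (q, q)) (𝓝 0) := by
    have hcont : ContinuousAt (fderiv 𝕜 r) q :=
      (hr.fderiv_right (m := 0) (by norm_num)).continuousAt
    simpa using (tendsto_const_nhds (x := fderiv 𝕜 r q)).sub
      (hcont.tendsto.comp (continuous_fst.tendsto (q, q)))
  have happly : (fun x : X × X ↦ (fderiv 𝕜 r q - fderiv 𝕜 r x.1) (x.1 - x.2))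
      =O[𝓝 (q, q)] fun x ↦ ‖fderiv 𝕜 r q - fderiv 𝕜 r x.1‖ * ‖x.1 - x.2‖ :=
    .of_norm_le fun x ↦ (fderiv 𝕜 r q - fderiv 𝕜 r x.1).le_opNorm (x.1 - x.2)
  have hproduct : (fun x : X × X ↦ ‖fderiv 𝕜 r q - fderiv 𝕜 r x.1‖ * ‖x.1 - x.2‖)
      =o[𝓝 (q, q)] fun x ↦ x.1 - x.2 := by
    simpa using ((isLittleO_one_iff ℝ).2 hfderiv).norm_left.mul_isBigO
      (isBigO_refl (fun x : X × X ↦ ‖x.1 - x.2‖) (𝓝 (q, q)))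
  refine (hstrict.add (happly.trans_isLittleO hproduct)).congr_left fun x ↦ ?_
  rw [_root_.sub_apply]
  abel

end LeastSquares

section LeastSquaresFlow

open Filter Asymptotics
open scoped Topology InnerProductSpace

variable {X Y : Type*} [NormedAddCommGroup X] [InnerProductSpace ℝ X] [CompleteSpace X]
  [NormedAddCommGroup Y] [InnerProductSpace ℝ Y] {r : X → Y} {S : Set X} {q : X}

theorem inner_gradient_half_norm_sq {p : X} (hr : DifferentiableAt ℝ r p) (v : X) :
    ⟪gradient (fun x ↦ 1 / 2 * ‖r x‖ ^ 2) p, v⟫_ℝ = ⟪r p, fderiv ℝ r p v⟫_ℝ := by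
  rw [inner_gradient_left, (hr.hasFDerivAt.norm_sq.const_mul (1 / 2)).fderiv]
  simp

/-- Pair `r p` with `r p ≈ Dr(p) (p - e p)`: the right-hand side gives the derivative of
`1 / 2 * ‖r‖ ^ 2` in the direction `p - e p`, whose length is at most a multiple of `‖r p‖`. -/
theorem HasLocalErrorBound.exists_polyakLojasiewicz (hr : ContDiffAt ℝ 1 r q) (hrq : r q = 0)
    (hS : ∀ p ∈ S, r p = 0) (h : HasLocalErrorBound r S q) :
    ∃ μ > 0, ∀ᶠ p in 𝓝 q,
      μ * (1 / 2 * ‖r p‖ ^ 2) ≤ ‖gradient (fun x ↦ 1 / 2 * ‖r x‖ ^ 2) p‖ ^ 2 := by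
  obtain ⟨e, heS, he⟩ := h
  have hr0 : Tendsto r (𝓝 q) (𝓝 0) := hrq ▸ hr.continuousAt.tendsto
  have hpair : Tendsto (fun p ↦ (p, e p)) (𝓝 q) (𝓝 (q, q)) := by
    have := tendsto_id.sub (he.trans_tendsto hr0)
    exact tendsto_id.prodMk_nhds (by simpa using this)
  have htaylor := ((isLittleO_sub_sub_fderiv hr).comp_tendsto hpair).trans_isBigO he
  obtain ⟨C, hC, hbound⟩ := he.exists_pos
  have hdiff : ∀ᶠ p in 𝓝 q, DifferentiableAt ℝ r p :=
    (hr.eventually (by simp)).mono fun p hp ↦ hp.differentiableAt one_ne_zero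
  refine ⟨1 / (2 * C ^ 2), by positivity, ?_⟩
  filter_upwards [heS, hdiff, hbound.bound, htaylor.bound (show (0 : ℝ) < 1 / 2 by norm_num)]
    with p hpS hp hdist hrem
  simp only [Function.comp_apply, hS _ hpS, sub_zero] at hrem
  set g := gradient (fun x ↦ 1 / 2 * ‖r x‖ ^ 2) p
  have hsq : ‖r p‖ * ‖r p‖ ≤ ‖r p‖ * (1 / 2 * ‖r p‖ + C * ‖g‖) := calc
    ‖r p‖ * ‖r p‖ = ⟪r p, r p - fderiv ℝ r p (p - e p)⟫_ℝ + ⟪g, p - e p⟫_ℝ := by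
      rw [inner_gradient_half_norm_sq hp, ← inner_add_right, sub_add_cancel,
        real_inner_self_eq_norm_mul_norm]
    _ ≤ ‖r p‖ * (1 / 2 * ‖r p‖) + ‖g‖ * (C * ‖r p‖) := by
      gcongr
      · exact (real_inner_le_norm _ _).trans (by gcongr)
      · exact (real_inner_le_norm _ _).trans (by gcongr)
    _ = ‖r p‖ * (1 / 2 * ‖r p‖ + C * ‖g‖) := by ring
  have hle : ‖r p‖ ≤ 2 * (C * ‖g‖) := by
    rcases (norm_nonneg (r p)).eq_or_lt with h0 | h0
    · rw [← h0]; positivity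
    · linarith [le_of_mul_le_mul_left hsq h0]
  rw [div_mul_eq_mul_div, one_mul, div_le_iff₀ (by positivity)]
  nlinarith [pow_le_pow_left₀ (norm_nonneg _) hle 2]

theorem HasLocalErrorBound.gradientFlowConvergesLocally [FiniteDimensional ℝ X]
    (hr : ContDiffAt ℝ 2 r q) (hrq : r q = 0) (hS : ∀ p ∈ S, r p = 0)
    (h : HasLocalErrorBound r S q) :
    GradientFlowConvergesLocally (fun p ↦ 1 / 2 * ‖r p‖ ^ 2) S q := by
  obtain ⟨μ, hμ, hPL⟩ := h.exists_polyakLojasiewicz (hr.of_le one_le_two) hrq hS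
  refine gradientFlowConvergesLocally_of_polyakLojasiewicz (contDiffAt_const.mul (hr.norm_sq ℝ))
    (fun p ↦ by positivity) (by simp [hrq]) hμ hPL (h.eventually_mem.mono fun p hp hVp ↦ hp ?_)
  simpa using hVp

end LeastSquaresFlow

section AngleCosine

open Filter Asymptotics
open scoped Topology

/-- The cosine of the argument of `ζ`, with value `0` at `ζ = 0`. -/
def cosArg (ζ : ℂ) : ℝ := ζ.re / ‖ζ‖

theorem cosArg_div (w z : ℂ) :
    cosArg (w / z) = (w.re * z.re + w.im * z.im) / (‖w‖ * ‖z‖) := by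
  rcases eq_or_ne z 0 with rfl | hz
  · simp [cosArg]
  · have hnorm : ‖z‖ ≠ 0 := norm_ne_zero_iff.2 hz
    rw [cosArg, Complex.div_re, norm_div, Complex.normSq_eq_norm_sq]
    field_simp

theorem contDiffAt_cosArg {k : WithTop ℕ∞} {ζ : ℂ} (hζ : ζ ≠ 0) : ContDiffAt ℝ k cosArg ζ :=
  Complex.reCLM.contDiff.contDiffAt.div (contDiffAt_norm ℝ hζ) (norm_ne_zero_iff.2 hζ)

/-- The derivative of `cosArg` at `ζ ≠ 0`. -/
def cosArgDeriv (ζ : ℂ) : ℂ →L[ℝ] ℝ :=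
  (ζ.im / ‖ζ‖ ^ 3) • (ζ.im • Complex.reCLM - ζ.re • Complex.imCLM)

theorem hasFDerivAt_cosArg {ζ : ℂ} (hζ : ζ ≠ 0) : HasFDerivAt cosArg (cosArgDeriv ζ) ζ := by
  have hnorm : ‖ζ‖ ≠ 0 := norm_ne_zero_iff.2 hζ
  have hnorm_deriv : HasFDerivAt (fun z : ℂ ↦ ‖z‖)
      (‖ζ‖⁻¹ • (ζ.re • Complex.reCLM + ζ.im • Complex.imCLM)) ζ := by
    have hsqrt := (hasFDerivAt_id ζ).norm_sq.sqrt (pow_ne_zero 2 hnorm)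
    simp only [id, sqrt_sq (norm_nonneg _)] at hsqrt
    refine hsqrt.congr_fderiv (ContinuousLinearMap.ext fun h ↦ ?_)
    simp only [ContinuousLinearMap.comp_id, _root_.smul_apply, _root_.add_apply, coe_innerSL_apply,
      Complex.inner, Complex.mul_re, Complex.conj_re, Complex.conj_im, Complex.reCLM_apply,
      Complex.imCLM_apply, nsmul_eq_mul, smul_eq_mul, Nat.cast_ofNat]
    field_simp
    ring
  refine (Complex.reCLM.hasFDerivAt.mul
    ((hasDerivAt_inv hnorm).comp_hasFDerivAt ζ hnorm_deriv)).congr_fderiv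
    (ContinuousLinearMap.ext fun h ↦ ?_)
  have hsq : ‖ζ‖ ^ 2 = ζ.re ^ 2 + ζ.im ^ 2 := by
    rw [← Complex.normSq_eq_norm_sq, Complex.normSq_apply]; ring
  simp only [cosArgDeriv, Complex.reCLM_apply, Complex.imCLM_apply, Function.comp_apply,
    _root_.smul_apply, _root_.add_apply, _root_.sub_apply, smul_eq_mul]
  field_simp
  rw [hsq]
  ring

theorem cosArgDeriv_eq_zero_iff {ζ h : ℂ} (hζ : ζ.im ≠ 0) :
    cosArgDeriv ζ h = 0 ↔ ζ.im * h.re = ζ.re * h.im := by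
  have hζ0 : ζ ≠ 0 := fun h0 ↦ hζ (by rw [h0, Complex.zero_im])
  simp [cosArgDeriv, hζ, hζ0, sub_eq_zero]

/-- Two angles of a nondegenerate triangle determine its shape: here the triangle has vertices
`0, 1, w`, and the derivative of the pair of angle cosines is injective. -/
theorem isBigO_sub_of_isBigO_cosArg_sub {α F : Type*} [SeminormedAddCommGroup F] {l : Filter α}
    {w : α → ℂ} {ζ : ℂ} {ρ : α → F} (hζ : ζ.im ≠ 0) (hw : Tendsto w l (𝓝 ζ))
    (h₀ : (fun x ↦ cosArg (w x) - cosArg ζ) =O[l] ρ)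
    (h₁ : (fun x ↦ cosArg (1 - w x) - cosArg (1 - ζ)) =O[l] ρ) :
    (fun x ↦ w x - ζ) =O[l] ρ := by
  have hne₀ : ζ ≠ 0 := fun h ↦ hζ (by rw [h, Complex.zero_im])
  have hne₁ : 1 - ζ ≠ 0 := fun h ↦ hζ (by rw [← sub_eq_zero.1 h, Complex.one_im])
  let D : ℂ →L[ℝ] ℝ × ℝ :=
    (cosArgDeriv ζ).prod (cosArgDeriv (1 - ζ) ∘SL (-ContinuousLinearMap.id ℝ ℂ))
  have hderiv : HasFDerivAt (fun z ↦ (cosArg z, cosArg (1 - z))) D ζ :=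
    (hasFDerivAt_cosArg hne₀).prodMk
      ((hasFDerivAt_cosArg hne₁).comp ζ ((hasFDerivAt_id ζ).const_sub 1))
  have hker : LinearMap.ker (D : ℂ →ₗ[ℝ] ℝ × ℝ) = ⊥ := by
    refine LinearMap.ker_eq_bot'.2 fun h hh ↦ ?_
    have hD₀ : ζ.im * h.re = ζ.re * h.im :=
      (cosArgDeriv_eq_zero_iff hζ).1 (congrArg Prod.fst hh)
    have hD₁ := (cosArgDeriv_eq_zero_iff (by simpa using hζ)).1 (congrArg Prod.snd hh)
    simp only [Complex.sub_im, Complex.one_im, Complex.sub_re, Complex.one_re,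
      ContinuousLinearMap.toLinearMap_neg, ContinuousLinearMap.coe_id, LinearMap.neg_apply,
      LinearMap.id_coe, id_eq, Complex.neg_re, Complex.neg_im] at hD₁
    have him : h.im = 0 := by linarith only [hD₀, hD₁]
    have hre : h.re = 0 := by simpa [him, hζ] using hD₀
    exact Complex.ext hre him
  have hpair := h₀.prod_left h₁
  exact ((hderiv.isTheta_sub
    (LinearMap.isClosedEmbedding_of_injective hker).isInducing).isBigO_symm.comp_tendsto hw).trans
    hpair

end AngleCosine

section ComplexPositions

open Filter Asymptotics
open scoped Topology

variable {n : ℕ} {P Q q : Conf n} {i j k : ℕ}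

/-- The position of agent `i`, with the plane identified with `ℂ`. -/
def complexPos (i : ℕ) : Conf n →L[ℝ] ℂ :=
  LinearMap.toContinuousLinearMap
    { toFun P := ⟨pt P i 0, pt P i 1⟩
      map_add' P Q := by by_cases hi : i < n <;> apply Complex.ext <;> simp [pt, hi]
      map_smul' c P := by by_cases hi : i < n <;> apply Complex.ext <;> simp [pt, hi] }

theorem complexPos_inj : complexPos i P = complexPos j P ↔ pt P i = pt P j := by
  refine ⟨fun h ↦ funext fun d ↦ ?_, fun h ↦ ?_⟩
  · fin_cases d
    exacts [congrArg Complex.re h, congrArg Complex.im h]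
  · exact Complex.ext (congrFun h 0) (congrFun h 1)

theorem eventually_complexPos_ne (h : pt q i ≠ pt q j) :
    ∀ᶠ p in 𝓝 q, complexPos j p ≠ complexPos i p :=
  ((complexPos j).continuous.continuousAt.ne_iff_eventually_ne
    (complexPos i).continuous.continuousAt).1 (mt complexPos_inj.1 h.symm)

theorem nrm_eq_norm (x : Vec2) : nrm x = ‖(⟨x 0, x 1⟩ : ℂ)‖ := by
  rw [nrm, Complex.norm_def, Complex.normSq_mk, dotProduct, Fin.sum_univ_two]

theorem nrm_pt_sub_pt : nrm (pt P i - pt P j) = ‖complexPos j P - complexPos i P‖ := by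
  rw [nrm_eq_norm, norm_sub_rev]
  rfl

/-- The shape of the triangle `ijk`: the image of vertex `k` under the similarity that takes the
vertices `i` and `j` to `0` and `1`. -/
def triangleShape (P : Conf n) (i j k : ℕ) : ℂ :=
  (complexPos k P - complexPos i P) / (complexPos j P - complexPos i P)

theorem angCosP_eq_cosArg (P : Conf n) (i j k : ℕ) :
    angCosP P (i, j, k) = cosArg (triangleShape P i j k) := by
  have hdot : (pt P i - pt P j) ⬝ᵥ (pt P i - pt P k) =
      (complexPos k P - complexPos i P).re * (complexPos j P - complexPos i P).re +
      (complexPos k P - complexPos i P).im * (complexPos j P - complexPos i P).im := by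
    change (pt P i - pt P j) ⬝ᵥ (pt P i - pt P k) =
      (pt P k 0 - pt P i 0) * (pt P j 0 - pt P i 0) + (pt P k 1 - pt P i 1) * (pt P j 1 - pt P i 1)
    simp only [dotProduct, Fin.sum_univ_two, Pi.sub_apply]
    ring
  rw [triangleShape, cosArg_div, ← hdot, ← nrm_pt_sub_pt, ← nrm_pt_sub_pt]
  simp only [angCosP, brg, smul_dotProduct, dotProduct_smul, smul_eq_mul, div_eq_mul_inv, mul_inv]
  ring

theorem one_sub_triangleShape (h : complexPos j P ≠ complexPos i P) :
    1 - triangleShape P i j k = triangleShape P j i k := by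
  have hji := sub_ne_zero.2 h
  have hij := sub_ne_zero.2 h.symm
  rw [triangleShape, triangleShape]
  field_simp
  ring

theorem contDiffAt_triangleShape {m : WithTop ℕ∞} (hij : complexPos j q ≠ complexPos i q) :
    ContDiffAt ℝ m (fun P ↦ triangleShape P i j k) q :=
  ((complexPos k - complexPos i).contDiff.contDiffAt).mul
    ((complexPos j - complexPos i).contDiff.contDiffAt.inv (sub_ne_zero.2 hij))

theorem contDiffAt_angCosP_s13 {m : WithTop ℕ∞} (hij : pt q i ≠ pt q j) (hik : pt q i ≠ pt q k) :
    ContDiffAt ℝ m (fun P ↦ angCosP P (i, j, k)) q := by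
  have hij' : complexPos j q ≠ complexPos i q := mt complexPos_inj.1 hij.symm
  have hik' : complexPos k q ≠ complexPos i q := mt complexPos_inj.1 hik.symm
  simp only [angCosP_eq_cosArg]
  exact (contDiffAt_cosArg (div_ne_zero (sub_ne_zero.2 hik') (sub_ne_zero.2 hij'))).comp q
    (contDiffAt_triangleShape hij')

theorem collinear_of_triangleShape_im_eq_zero (hij : pt P i ≠ pt P j)
    (h : (triangleShape P i j k).im = 0) : Collinear ℝ {pt P i, pt P j, pt P k} := by
  have hne : complexPos j P - complexPos i P ≠ 0 :=
    sub_ne_zero.2 (mt complexPos_inj.1 hij.symm)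
  set s := (triangleShape P i j k).re
  have hs : triangleShape P i j k = s := Complex.ext rfl h
  have hk : complexPos k P - complexPos i P = s * (complexPos j P - complexPos i P) := by
    rw [← hs, triangleShape, div_mul_cancel₀ _ hne]
  have hpt : pt P k = AffineMap.lineMap (pt P i) (pt P j) s := funext fun d ↦ by
    rw [AffineMap.lineMap_apply, vsub_eq_sub, vadd_eq_add, Pi.add_apply, ← sub_eq_iff_eq_add]
    fin_cases d
    · simpa [complexPos] using congrArg Complex.re hk
    · simpa [complexPos] using congrArg Complex.im hk
  have hmem : pt P k ∈ line[ℝ, pt P i, pt P j] := hpt ▸ AffineMap.lineMap_mem_affineSpan_pair ..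
  rw [Set.pair_comm, Set.insert_comm]
  exact collinear_insert_of_mem_affineSpan_pair hmem

theorem isBigO_triangleShape_sub {F : Type*} [SeminormedAddCommGroup F] {ρ : Conf n → F}
    (hcol : ¬ Collinear ℝ {pt q i, pt q j, pt q k})
    (hi : (fun p ↦ angCosP p (i, j, k) - angCosP q (i, j, k)) =O[𝓝 q] ρ)
    (hj : (fun p ↦ angCosP p (j, i, k) - angCosP q (j, i, k)) =O[𝓝 q] ρ) :
    (fun p ↦ triangleShape p i j k - triangleShape q i j k) =O[𝓝 q] ρ := by
  have hij : pt q i ≠ pt q j := ne₁₂_of_not_collinear hcol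
  have hne : complexPos j q ≠ complexPos i q := mt complexPos_inj.1 hij.symm
  simp only [angCosP_eq_cosArg] at hi hj
  refine isBigO_sub_of_isBigO_cosArg_sub (mt (collinear_of_triangleShape_im_eq_zero hij) hcol)
    (contDiffAt_triangleShape (m := 0) hne).continuousAt hi (hj.congr' ?_ .rfl)
  filter_upwards [eventually_complexPos_ne hij] with p hp
  rw [one_sub_triangleShape hp, one_sub_triangleShape hne]

/-- The configuration with given complex positions. -/
def confOfComplex (n : ℕ) (z : ℕ → ℂ) : Conf n :=
  WithLp.toLp 2 fun x ↦ ![(z x.1).re, (z x.1).im] x.2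

theorem complexPos_confOfComplex (z : ℕ → ℂ) (hi : i < n) :
    complexPos i (confOfComplex n z) = z i := by
  apply Complex.ext <;> simp [complexPos, confOfComplex, pt, hi]

theorem isBigO_of_isBigO_complexPos {α F : Type*} [SeminormedAddCommGroup F] {l : Filter α}
    {f : α → Conf n} {ρ : α → F} (h : ∀ i < n, (fun x ↦ complexPos i (f x)) =O[l] ρ) :
    f =O[l] ρ := by
  refine (ContinuousLinearEquiv.isBigO_comp_rev
    (PiLp.continuousLinearEquiv 2 ℝ (fun _ : Fin n × Fin 2 ↦ ℝ)) f l).trans (isBigO_pi.2 ?_)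
  rintro ⟨i, d⟩
  refine .trans (.of_norm_le fun x ↦ ?_) (h i i.2).norm_left
  fin_cases d
  · simpa [complexPos, pt] using Complex.abs_re_le_norm (complexPos i (f x))
  · simpa [complexPos, pt] using Complex.abs_im_le_norm (complexPos i (f x))

end ComplexPositions

section TargetSet

variable {n : ℕ} {P Q S : Conf n}

theorem mem_targetSet_trans (hQ : Q ∈ targetSet P) (hS : S ∈ targetSet Q) : S ∈ targetSet P := by
  obtain ⟨c, hc, R, hR, ξ, hQ⟩ := hQ
  obtain ⟨c', hc', R', hR', ξ', hS⟩ := hS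
  refine ⟨c' * c, mul_ne_zero hc' hc, R' * R, mul_mem hR' hR, c' • R' *ᵥ ξ + ξ', fun i ↦ ?_⟩
  rw [hS, hQ, mulVec_add, mulVec_smul, mulVec_mulVec, smul_add, smul_smul, add_assoc]

theorem mem_targetSet_symm (hQ : Q ∈ targetSet P) : P ∈ targetSet Q := by
  obtain ⟨c, hc, R, hR, ξ, hQ⟩ := hQ
  refine ⟨c⁻¹, inv_ne_zero hc, Rᵀ, Unitary.star_mem hR, -(c⁻¹ • Rᵀ *ᵥ ξ), fun i ↦ ?_⟩
  have hRR : Rᵀ * R = 1 := (mem_orthogonalGroup_iff' (Fin 2) ℝ).1 hR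
  rw [hQ, mulVec_add, mulVec_smul, mulVec_mulVec, hRR, one_mulVec, smul_add, inv_smul_smul₀ hc,
    add_neg_cancel_right]

theorem targetSet_eq_of_mem (hQ : Q ∈ targetSet P) : targetSet P = targetSet Q :=
  Set.ext fun _ ↦ ⟨mem_targetSet_trans (mem_targetSet_symm hQ), mem_targetSet_trans hQ⟩

theorem exists_affineMap_of_mem_targetSet (hQ : Q ∈ targetSet P) :
    ∃ f : Vec2 →ᵃ[ℝ] Vec2, ∀ i < n, pt Q i = f (pt P i) := by
  obtain ⟨c, -, R, -, ξ, hQ⟩ := hQ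
  exact ⟨(c • R.mulVecLin).toAffineMap + AffineMap.const ℝ Vec2 ξ, fun i hi ↦ hQ ⟨i, hi⟩⟩

theorem pt_ne_of_mem_targetSet (hQ : Q ∈ targetSet P) {i j : ℕ} (hi : i < n) (hj : j < n)
    (h : pt P i ≠ pt P j) : pt Q i ≠ pt Q j := by
  obtain ⟨f, hf⟩ := exists_affineMap_of_mem_targetSet (mem_targetSet_symm hQ)
  exact fun heq ↦ h (by rw [hf i hi, hf j hj, heq])

theorem collinear_image_affineMap {k V₁ V₂ P₁ P₂ : Type*} [Field k] [AddCommGroup V₁] [Module k V₁]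
    [AddTorsor V₁ P₁] [AddCommGroup V₂] [Module k V₂] [AddTorsor V₂ P₂] {s : Set P₁}
    (hs : Collinear k s) (f : P₁ →ᵃ[k] P₂) : Collinear k (f '' s) := by
  obtain ⟨p, v, h⟩ := (collinear_iff_exists_forall_eq_smul_vadd s).1 hs
  refine (collinear_iff_exists_forall_eq_smul_vadd _).2 ⟨f p, f.linear v, ?_⟩
  rintro _ ⟨x, hx, rfl⟩
  obtain ⟨c, rfl⟩ := h x hx
  exact ⟨c, by rw [f.map_vadd, map_smul]⟩

theorem StronglyNondegP.of_mem_targetSet {E : Finset (ℕ × ℕ)} (hE : ∀ e ∈ E, e.1 < n ∧ e.2 < n)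
    (hP : StronglyNondegP E P) (hQ : Q ∈ targetSet P) : StronglyNondegP E Q := by
  obtain ⟨f, hf⟩ := exists_affineMap_of_mem_targetSet (mem_targetSet_symm hQ)
  intro i j k hij hjk hik hcol
  refine hP i j k hij hjk hik ?_
  rw [hf i (hE _ hij).1, hf j (hE _ hij).2, hf k (hE _ hjk).2]
  simpa only [Set.image_insert_eq, Set.image_singleton] using
    collinear_image_affineMap hcol f

theorem nrm_smul (c : ℝ) (x : Vec2) : nrm (c • x) = |c| * nrm x := by
  rw [nrm, nrm, smul_dotProduct, dotProduct_smul, smul_smul, smul_eq_mul,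
    sqrt_mul (mul_self_nonneg c), sqrt_mul_self_eq_abs]

theorem mulVec_dotProduct_mulVec_of_mem_orthogonalGroup {m A : Type*} [Fintype m] [DecidableEq m]
    [CommRing A] {R : Matrix m m A} (hR : R ∈ orthogonalGroup m A) (x y : m → A) :
    R *ᵥ x ⬝ᵥ R *ᵥ y = x ⬝ᵥ y := by
  have hRR : Rᵀ * R = 1 := (mem_orthogonalGroup_iff' m A).1 hR
  rw [dotProduct_mulVec, ← mulVec_transpose, mulVec_mulVec, hRR, one_mulVec]

theorem brg_similarity (c : ℝ) {R : Matrix (Fin 2) (Fin 2) ℝ} (hR : R ∈ orthogonalGroup (Fin 2) ℝ)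
    (ξ x y : Vec2) :
    brg (c • R *ᵥ x + ξ) (c • R *ᵥ y + ξ) = (|c|⁻¹ * c) • R *ᵥ brg x y := by
  have hsub : c • R *ᵥ x + ξ - (c • R *ᵥ y + ξ) = c • R *ᵥ (x - y) := by
    rw [mulVec_sub, smul_sub, add_sub_add_right_eq_sub]
  have hnrm : nrm (R *ᵥ (x - y)) = nrm (x - y) := by
    rw [nrm, nrm, mulVec_dotProduct_mulVec_of_mem_orthogonalGroup hR]
  rw [brg, brg, hsub, nrm_smul, hnrm, mulVec_smul, smul_smul, smul_smul, mul_inv, mul_right_comm]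

theorem angCosP_eq_of_mem_targetSet (hQ : Q ∈ targetSet P) {t : ℕ × ℕ × ℕ}
    (ht : t.1 < n ∧ t.2.1 < n ∧ t.2.2 < n) : angCosP Q t = angCosP P t := by
  obtain ⟨c, hc, R, hR, ξ, hQ⟩ := hQ
  have hsign : |c|⁻¹ * c * (|c|⁻¹ * c) = 1 := by
    rw [mul_mul_mul_comm, ← abs_mul_abs_self c]
    field_simp
  rw [angCosP, angCosP, hQ ⟨_, ht.1⟩, hQ ⟨_, ht.2.1⟩, hQ ⟨_, ht.2.2⟩, brg_similarity c hR,
    brg_similarity c hR, smul_dotProduct, dotProduct_smul, smul_smul, hsign, one_smul,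
    mulVec_dotProduct_mulVec_of_mem_orthogonalGroup hR]

theorem VF_eq_of_mem_targetSet {TF : Finset (ℕ × ℕ × ℕ)}
    (hTF : ∀ t ∈ TF, t.1 < n ∧ t.2.1 < n ∧ t.2.2 < n) (hQ : Q ∈ targetSet P) :
    VF TF P = VF TF Q := by
  funext S
  rw [VF, VF]
  congr! 4 with t ht
  exact (angCosP_eq_of_mem_targetSet hQ (hTF t ht)).symm

/-- In real coordinates, multiplication by `a` is the rotation matrix of `a / ‖a‖` scaled by
`‖a‖`. -/
theorem mem_targetSet_of_complexPos_eq {a b : ℂ} (ha : a ≠ 0)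
    (h : ∀ i < n, complexPos i Q = a * complexPos i P + b) : Q ∈ targetSet P := by
  have hnorm : ‖a‖ ≠ 0 := norm_ne_zero_iff.2 ha
  have hsq : (a.re / ‖a‖) ^ 2 + (-(a.im / ‖a‖)) ^ 2 = 1 := by
    field_simp
    rw [← Complex.normSq_eq_norm_sq, Complex.normSq_apply]
    ring
  have hrotation : !![a.re / ‖a‖, -(a.im / ‖a‖); a.im / ‖a‖, a.re / ‖a‖] ∈
      orthogonalGroup (Fin 2) ℝ :=
    (of_mem_specialOrthogonalGroup_fin_two_iff.2 ⟨rfl, rfl, hsq⟩).1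
  refine ⟨‖a‖, hnorm, _, hrotation, ![b.re, b.im], fun i ↦ ?_⟩
  have hre : pt Q i 0 = a.re * pt P i 0 - a.im * pt P i 1 + b.re := congrArg Complex.re (h i i.2)
  have him : pt Q i 1 = a.re * pt P i 1 + a.im * pt P i 0 + b.im := congrArg Complex.im (h i i.2)
  rw [mulVec_fin_two, smul_vec2, vec2_add]
  refine (FinVec.etaExpand_eq (pt Q i)).symm.trans (vec2_eq (hre.trans ?_) (him.trans ?_))
  · simp only [of_apply, cons_val', cons_val_zero, cons_val_one, cons_val_fin_one, smul_eq_mul]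
    field_simp
    ring
  · simp only [of_apply, cons_val', cons_val_zero, cons_val_one, cons_val_fin_one, smul_eq_mul]
    field_simp
    ring

end TargetSet

section Alignment

open Filter Asymptotics
open scoped Topology

variable {n : ℕ} {p q : Conf n}

/-- The position of agent `i` in the image of `q` under the direct similarity of the plane that
moves the agents `0` and `1` of `q` to their positions in `p`. -/
def alignedPos (q p : Conf n) (i : ℕ) : ℂ :=
  complexPos 0 p + (complexPos 1 p - complexPos 0 p) * triangleShape q 0 1 i

theorem eventually_confOfComplex_alignedPos_mem_targetSet (h01 : pt q 0 ≠ pt q 1) :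
    ∀ᶠ p in 𝓝 q, confOfComplex n (alignedPos q p) ∈ targetSet q := by
  have hne : complexPos 1 q ≠ complexPos 0 q := mt complexPos_inj.1 h01.symm
  filter_upwards [eventually_complexPos_ne h01] with p hp
  refine mem_targetSet_of_complexPos_eq
    (a := (complexPos 1 p - complexPos 0 p) / (complexPos 1 q - complexPos 0 q))
    (b := complexPos 0 p - (complexPos 1 p - complexPos 0 p) / (complexPos 1 q - complexPos 0 q) *
      complexPos 0 q)
    (div_ne_zero (sub_ne_zero.2 hp) (sub_ne_zero.2 hne)) fun i hi ↦ ?_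
  rw [complexPos_confOfComplex _ hi, alignedPos, triangleShape]
  ring

theorem isBigO_third_vertex_sub {α F : Type*} [SeminormedAddCommGroup F] {l : Filter α}
    {xi xj xk yi yj yk : α → ℂ} {s : ℂ} {ρ : α → F}
    (hi : (fun t ↦ xi t - yi t) =O[l] ρ) (hj : (fun t ↦ xj t - yj t) =O[l] ρ)
    (hbdd : (fun t ↦ xj t - xi t) =O[l] fun _ ↦ (1 : ℝ)) (hne : ∀ᶠ t in l, xj t ≠ xi t)
    (hshape : (fun t ↦ (xk t - xi t) / (xj t - xi t) - s) =O[l] ρ)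
    (hy : ∀ t, yk t - yi t = s * (yj t - yi t)) :
    (fun t ↦ xk t - yk t) =O[l] ρ := by
  have hproduct : (fun t ↦ ((xk t - xi t) / (xj t - xi t) - s) * (xj t - xi t)) =O[l] ρ := by
    simpa only [mul_one, isBigO_norm_right] using hshape.norm_right.mul hbdd
  refine ((hi.add hproduct).add ((hj.sub hi).const_mul_left s)).congr' ?_ .rfl
  filter_upwards [hne] with t ht
  have hcancel := div_mul_cancel₀ (xk t - xi t) (sub_ne_zero.2 ht)
  linear_combination hcancel + hy t

namespace IsTLGraph

variable {m : ℕ} {F : Finset (ℕ × ℕ)}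

theorem zero_one_mem (h : IsTLGraph m F) : (0, 1) ∈ F := by
  induction h with
  | base => simp
  | step _ _ ih => exact Finset.mem_union_left _ ih

theorem lt_of_mem (h : IsTLGraph m F) {e : ℕ × ℕ} (he : e ∈ F) : e.1 < m ∧ e.2 < m := by
  induction h generalizing e with
  | base => revert e; decide
  | step _ hij ih =>
    have := ih hij
    simp only [Finset.mem_union, Finset.mem_insert, Finset.mem_singleton] at he
    rcases he with he | rfl | rfl | rfl | rfl
    · have := ih he; lia
    all_goals lia

/-- Each new vertex spans a triangle with an edge that is already aligned up to an error `O(ρ)`,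
and the shape of that triangle is correct up to `O(ρ)`. -/
theorem isBigO_complexPos_sub_alignedPos (h : IsTLGraph m F) {Y : Type*} [SeminormedAddCommGroup Y]
    {ρ : Conf n → Y} (h01 : pt q 0 ≠ pt q 1)
    (hshape : ∀ i j k, (i, j) ∈ F → (j, k) ∈ F → (i, k) ∈ F → i < k → j < k →
      pt q i ≠ pt q j ∧ (fun p ↦ triangleShape p i j k - triangleShape q i j k) =O[𝓝 q] ρ) :
    ∀ i < m, (fun p ↦ complexPos i p - alignedPos q p i) =O[𝓝 q] ρ := by
  induction h with
  | base =>
    intro i hi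
    refine (isBigO_zero ρ (𝓝 q)).congr_left fun p ↦ ?_
    have hne := sub_ne_zero.2 (mt complexPos_inj.1 h01.symm)
    interval_cases i <;> simp [alignedPos, triangleShape, hne]
  | @step m F i j hF hij ih =>
    have haligned := ih fun a b c hab hbc hac ↦ hshape a b c (Finset.mem_union_left _ hab)
      (Finset.mem_union_left _ hbc) (Finset.mem_union_left _ hac)
    intro k hk
    rcases Nat.lt_succ_iff_lt_or_eq.1 hk with hk | rfl
    · exact haligned k hk
    obtain ⟨hi, hj⟩ := hF.lt_of_mem hij
    obtain ⟨hne, hO⟩ := hshape i j k (Finset.mem_union_left _ hij) (by simp) (by simp) hi hj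
    have hcont (i : ℕ) : ContinuousAt (complexPos i) q := (complexPos i).continuous.continuousAt
    refine isBigO_third_vertex_sub (haligned i hi) (haligned j hj)
      (((hcont j).sub (hcont i)).isBigO_one ℝ)
      (eventually_complexPos_ne hne) hO fun p ↦ ?_
    have := sub_ne_zero.2 (mt complexPos_inj.1 hne.symm)
    simp only [alignedPos, triangleShape]
    field_simp
    ring

end IsTLGraph

end Alignment

section AngleResidual

open Filter Asymptotics
open scoped Topology

variable {n : ℕ} {TF : Finset (ℕ × ℕ × ℕ)} {P q : Conf n}

/-- The vector of the errors of the angle cosines, so that the cost function is half its squared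
norm. -/
def angResidual (TF : Finset (ℕ × ℕ × ℕ)) (Pstar P : Conf n) : EuclideanSpace ℝ TF :=
  WithLp.toLp 2 fun t ↦ angCosP P t - angCosP Pstar t

theorem VF_eq_half_norm_angResidual_sq (TF : Finset (ℕ × ℕ × ℕ)) (Pstar : Conf n) :
    VF TF Pstar = fun P ↦ 1 / 2 * ‖angResidual TF Pstar P‖ ^ 2 := by
  funext P
  rw [VF, EuclideanSpace.real_norm_sq_eq, ← Finset.sum_coe_sort TF]
  rfl

theorem contDiffAt_angResidual {m : WithTop ℕ∞}
    (h : ∀ t ∈ TF, pt q t.1 ≠ pt q t.2.1 ∧ pt q t.1 ≠ pt q t.2.2) :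
    ContDiffAt ℝ m (angResidual TF P) q :=
  contDiffAt_euclidean.2 fun t ↦
    (contDiffAt_angCosP_s13 (h t t.2).1 (h t t.2).2).sub contDiffAt_const

theorem angResidual_eq_zero_of_mem_targetSet
    (hTF : ∀ t ∈ TF, t.1 < n ∧ t.2.1 < n ∧ t.2.2 < n) (hq : q ∈ targetSet P) :
    angResidual TF P q = 0 := by
  ext t
  exact sub_eq_zero.2 (angCosP_eq_of_mem_targetSet hq (hTF t t.2))

theorem isBigO_angCosP_sub {t : ℕ × ℕ × ℕ} (ht : t ∈ TF) (l : Filter (Conf n)) :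
    (fun P ↦ angCosP P t - angCosP q t) =O[l] angResidual TF q :=
  .of_bound' <| .of_forall fun P ↦ PiLp.norm_apply_le (angResidual TF q P) ⟨t, ht⟩

theorem hasLocalErrorBound_angResidual {F : Finset (ℕ × ℕ)} (hF : IsTLGraph n F)
    (h01 : pt q 0 ≠ pt q 1) (hnd : StronglyNondegP F q)
    (hTF : ∀ i j k, (i, j) ∈ F → (j, k) ∈ F → (i, k) ∈ F → i < k → j < k →
      (i, j, k) ∈ TF ∧ (j, i, k) ∈ TF) :
    HasLocalErrorBound (angResidual TF q) (targetSet q) q := by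
  refine ⟨fun p ↦ confOfComplex n (alignedPos q p),
    eventually_confOfComplex_alignedPos_mem_targetSet h01,
    isBigO_of_isBigO_complexPos fun i hi ↦ ?_⟩
  simp only [map_sub, complexPos_confOfComplex _ hi]
  refine hF.isBigO_complexPos_sub_alignedPos h01 (fun i j k hij hjk hik hi hj ↦ ?_) i hi
  obtain ⟨hijk, hjik⟩ := hTF i j k hij hjk hik hi hj
  have hcol := hnd i j k hij hjk hik
  exact ⟨ne₁₂_of_not_collinear hcol,
    isBigO_triangleShape_sub hcol (isBigO_angCosP_sub hijk _) (isBigO_angCosP_sub hjik _)⟩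

end AngleResidual

/-- under Assumption 1 (the graph contains a spanning triangulated Laman
subgraph whose target framework is strongly nondegenerate), every point of the target
shape set `𝓔 = 𝒮_{p*}` has a neighborhood `U` such that from every initial condition in
`U` a global solution of the gradient flow `ṗ = −∇V_F(p)` exists, and every such
solution converges to some point of `𝓔`. -/
theorem formation_gradient_flow_locally_converges
    {n : ℕ} (hn : 3 ≤ n) (E : Finset (ℕ × ℕ))
    (hV : ∀ e ∈ E, e.1 < n ∧ e.2 < n)
    (hsym : ∀ e ∈ E, (e.2, e.1) ∈ E)
    (hirr : ∀ e ∈ E, e.1 ≠ e.2)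
    (TF : Finset (ℕ × ℕ × ℕ))
    (hTF : ∀ t : ℕ × ℕ × ℕ, t ∈ TF ↔
      ((t.1, t.2.1) ∈ E ∧ (t.2.1, t.2.2) ∈ E ∧ (t.1, t.2.2) ∈ E ∧
        t.1 < t.2.2 ∧ t.2.1 < t.2.2))
    (Pstar : Conf n)
    (hPs : ∀ e ∈ E, pt Pstar e.1 ≠ pt Pstar e.2)
    -- Assumption 1: a spanning triangulated Laman subgraph, strongly nondegenerate at p*
    (EL : Finset (ℕ × ℕ)) (hTL : IsTLGraph n EL) (hsub : ∀ e ∈ EL, e ∈ E)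
    (hsnd : StronglyNondegP EL Pstar) :
    ∀ q ∈ targetSet Pstar, ∃ U ∈ nhds q, ∀ P0 ∈ U,
      (∃ sol : ℝ → Conf n, sol 0 = P0 ∧
        ∀ t : ℝ, 0 ≤ t → HasDerivAt sol (-(gradient (VF TF Pstar) (sol t))) t) ∧
      (∀ sol : ℝ → Conf n, sol 0 = P0 →
        (∀ t : ℝ, 0 ≤ t → HasDerivAt sol (-(gradient (VF TF Pstar) (sol t))) t) →
        ∃ pd ∈ targetSet Pstar, Filter.Tendsto sol Filter.atTop (nhds pd)) := by
  intro q hq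
  have hTFlt (t) (ht : t ∈ TF) : t.1 < n ∧ t.2.1 < n ∧ t.2.2 < n := by
    obtain ⟨h₁, h₂, -⟩ := (hTF t).1 ht
    exact ⟨(hV _ h₁).1, (hV _ h₁).2, (hV _ h₂).2⟩
  have hne (i j) (hij : (i, j) ∈ E) : pt q i ≠ pt q j :=
    pt_ne_of_mem_targetSet hq (hV _ hij).1 (hV _ hij).2 (hPs _ hij)
  have hTFne (t) (ht : t ∈ TF) : pt q t.1 ≠ pt q t.2.1 ∧ pt q t.1 ≠ pt q t.2.2 := by
    obtain ⟨h₁, -, h₂, -⟩ := (hTF t).1 ht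
    exact ⟨hne _ _ h₁, hne _ _ h₂⟩
  have hzero (p) (hp : p ∈ targetSet q) : angResidual TF q p = 0 :=
    angResidual_eq_zero_of_mem_targetSet hTFlt hp
  have hbound : HasLocalErrorBound (angResidual TF q) (targetSet q) q := by
    refine hasLocalErrorBound_angResidual hTL (hne _ _ (hsub _ hTL.zero_one_mem))
      (hsnd.of_mem_targetSet (fun e he ↦ hV e (hsub e he)) hq)
      fun i j k hij hjk hik hi hj ↦ ⟨(hTF _).2 ?_, (hTF _).2 ?_⟩
    · exact ⟨hsub _ hij, hsub _ hjk, hsub _ hik, hi, hj⟩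
    · exact ⟨hsym _ (hsub _ hij), hsub _ hik, hsub _ hjk, hj, hi⟩
  rw [VF_eq_of_mem_targetSet hTFlt hq, targetSet_eq_of_mem hq, VF_eq_half_norm_angResidual_sq]
  exact hbound.gradientFlowConvergesLocally (contDiffAt_angResidual hTFne)
    (hzero q (targetSet_eq_of_mem hq ▸ hq)) hzero
end
end
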